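/- arXiv:1505.07665 — 2 statements merged into one kernel-verified Lean document; each statement's English description precedes it below -/
import Mathlib

section
/- For all integers k ≥ 1 and n ≥ 1, the k-twist congruence ≡ᵏ is a lattice congruence of the weak order on S_n: every ≡ᵏ-class has a weak-order minimum and a weak-order maximum, and whenever τ ≤ τ' in the weak order, the minimum of the ≡ᵏ-class of τ is ≤ the minimum of the ≡ᵏ-class of τ', and the maximum of the ≡ᵏ-class of τ is ≤ the maximum of the ≡ᵏ-class of τ'. -/
/-!
Say that `u` robustly precedes `v` in `τ` if `u` occurs before `v` and fewer than `k` values strictly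
between `u` and `v` occur after `v`. A rewriting step exchanges two adjacent values exactly when
neither robustly precedes the other, and such a step preserves the whole relation
(`Robust.of_step`): the only other counts it can affect belong to pairs whose value interval contains
that of the exchanged pair, and these are at least `k` both before and after. So the robust relation
is an invariant of the `k`-twist class.

Let `m` be an element of a class in which every adjacent descent is robust; the lexicographically
smallest element is one. Then every coinversion of `m` is a chain of robust descents
(`inversion_of_robust`). As robustness is a class invariant, the coinversions of `m` belong to every
element of the class, so `m` is its minimum. Robust descents persist when going up in the weak order
(`Robust.mono`): if `c` precedes `a < c` robustly in `τ ≤ τ'`, every `b > a` located before `a` in `τ`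
is still before `a` in `τ'`. Hence the minima are monotone. The statements on maxima follow by
reversing the values, which preserves rewriting steps and reverses the weak order.
-/

/-- The (right) weak order on permutations of `Fin n`: `τ ≤ σ` iff every coinversion of `τ`
(pair of values `i < j` whose positions in `τ` are inverted) is a coinversion of `σ`. -/
def weakLE {n : ℕ} (τ σ : Equiv.Perm (Fin n)) : Prop :=
  ∀ i j : Fin n, i < j → τ.symm j < τ.symm i → σ.symm j < σ.symm i
/-- One rewriting step of the `k`-twist congruence: exchange two adjacent entries of the
one-line notation (positions `p` and `q = p+1`) provided at least `k` values strictly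
between the two exchanged values occur at later positions. -/
def twistStep (k : ℕ) {n : ℕ} (τ τ' : Equiv.Perm (Fin n)) : Prop :=
  ∃ p q : Fin n, (q : ℕ) = (p : ℕ) + 1 ∧ τ' = τ * Equiv.swap p q ∧
    k ≤ (Finset.univ.filter (fun b : Fin n =>
      min (τ p) (τ q) < b ∧ b < max (τ p) (τ q) ∧ q < τ.symm b)).card

/-- The `k`-twist congruence `≡ᵏ` on permutations of `Fin n`: the equivalence relation
generated by the rewriting rule `twistStep`. -/
def twistCong (k : ℕ) {n : ℕ} : Equiv.Perm (Fin n) → Equiv.Perm (Fin n) → Prop :=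
  Relation.EqvGen (twistStep k)

/-- `u` robustly precedes `v` in `τ`: it occurs earlier in the one-line notation, and fewer than `k`
values strictly between `u` and `v` occur after `v`. -/
def Robust (k : ℕ) {n : ℕ} (τ : Equiv.Perm (Fin n)) (u v : Fin n) : Prop :=
  τ.symm u < τ.symm v ∧
    (Finset.univ.filter (fun b : Fin n =>
      min u v < b ∧ b < max u v ∧ τ.symm v < τ.symm b)).card < k

lemma swap_lt_swap {n : ℕ} {p q x y : Fin n} (hpq : (q : ℕ) = p + 1) (h : x < y) :
    Equiv.swap p q x < Equiv.swap p q y ∨ (x = p ∧ y = q) := by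
  simp only [Equiv.swap_apply_def]
  split_ifs <;> simp only [Fin.lt_def, Fin.ext_iff] at * <;> omega

lemma lt_of_swap_lt_swap {n : ℕ} {p q x y : Fin n} (hpq : (q : ℕ) = p + 1)
    (h : Equiv.swap p q x < Equiv.swap p q y) : x < y ∨ (x = q ∧ y = p) := by
  rcases swap_lt_swap hpq h with h | ⟨h1, h2⟩
  · left; simpa using h
  · right
    constructor
    · rw [← Equiv.swap_apply_self p q x, h1, Equiv.swap_apply_left]
    · rw [← Equiv.swap_apply_self p q y, h2, Equiv.swap_apply_right]

lemma symm_mul_swap {n : ℕ} (τ : Equiv.Perm (Fin n)) (p q x : Fin n) :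
    (τ * Equiv.swap p q).symm x = Equiv.swap p q (τ.symm x) := by
  rw [Equiv.symm_apply_eq]; simp

lemma Robust.of_step {k n : ℕ} {τ τ' : Equiv.Perm (Fin n)} (h : twistStep k τ τ') {u v : Fin n}
    (hr : Robust k τ u v) : Robust k τ' u v := by
  obtain ⟨p, q, hpq, rfl, hk⟩ := h
  obtain ⟨h1, h2⟩ := hr
  have hlt : p < q := by rw [Fin.lt_def]; omega
  refine ⟨?_, lt_of_le_of_lt (Finset.card_le_card ?_) h2⟩
  · rw [symm_mul_swap, symm_mul_swap]
    rcases swap_lt_swap hpq h1 with h | ⟨hu, hv⟩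
    · exact h
    · exfalso
      rw [Equiv.symm_apply_eq] at hu hv
      subst hu hv
      simp only [Equiv.symm_apply_apply] at h2
      omega
  · intro b hb
    simp only [Finset.mem_filter, Finset.mem_univ, true_and, symm_mul_swap] at hb ⊢
    obtain ⟨hb1, hb2, hb3⟩ := hb
    refine ⟨hb1, hb2, ?_⟩
    rcases lt_of_swap_lt_swap hpq hb3 with h | ⟨hv, hb⟩
    · exact h
    · exfalso
      rw [Equiv.symm_apply_eq] at hv hb
      subst hv hb
      -- `τ p` lies between `u` and `τ q`, so all values between `τ p` and `τ q` do too.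
      refine absurd (hk.trans (Finset.card_le_card ?_)) (not_le.mpr h2)
      intro x hx
      simp only [Finset.mem_filter, Finset.mem_univ, true_and, Equiv.symm_apply_apply] at hx ⊢
      obtain ⟨hx1, hx2, hx3⟩ := hx
      refine ⟨?_, ?_, hx3⟩ <;> grind

lemma twistStep.symm {k n : ℕ} {τ τ' : Equiv.Perm (Fin n)} (h : twistStep k τ τ') :
    twistStep k τ' τ := by
  obtain ⟨p, q, hpq, rfl, hk⟩ := h
  refine ⟨p, q, hpq, by simp [mul_assoc], hk.trans (Finset.card_le_card ?_)⟩
  intro x hx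
  have hlt : p < q := by rw [Fin.lt_def]; omega
  simp only [Finset.mem_filter, Finset.mem_univ, true_and, symm_mul_swap, Equiv.Perm.mul_apply,
    Equiv.swap_apply_left, Equiv.swap_apply_right] at hx ⊢
  obtain ⟨hx1, hx2, hx3⟩ := hx
  rw [min_comm, max_comm, Equiv.swap_apply_of_ne_of_ne (hlt.trans hx3).ne' hx3.ne']
  exact ⟨hx1, hx2, hx3⟩

lemma robust_iff_of_cong {k n : ℕ} {τ τ' : Equiv.Perm (Fin n)} (h : twistCong k τ τ') (u v : Fin n) :
    Robust k τ u v ↔ Robust k τ' u v := by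
  induction h with
  | rel _ _ h => exact ⟨Robust.of_step h, Robust.of_step h.symm⟩
  | refl _ => rfl
  | symm _ _ _ ih => exact ih.symm
  | trans _ _ _ _ _ ih1 ih2 => exact ih1.trans ih2

lemma Robust.mono {k n : ℕ} {τ τ' : Equiv.Perm (Fin n)} (h : weakLE τ τ') {a c : Fin n} (hac : a < c)
    (hr : Robust k τ c a) : Robust k τ' c a := by
  refine ⟨h a c hac hr.1, lt_of_le_of_lt (Finset.card_le_card ?_) hr.2⟩
  intro b hb
  simp only [Finset.mem_filter, Finset.mem_univ, true_and] at hb ⊢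
  obtain ⟨hb1, hb2, hb3⟩ := hb
  refine ⟨hb1, hb2, ?_⟩
  have hab : a < b := by rwa [min_eq_right hac.le] at hb1
  by_contra hcon
  have hne : τ.symm b ≠ τ.symm a := fun e => hab.ne' (τ.symm.injective e)
  exact absurd (h a b hab (lt_of_le_of_ne (not_lt.mp hcon) hne)) hb3.not_gt

/-- If an interval of positions starts with a value `≥ c`, ends with a value `≤ a`, and contains only
such values, then a value `≥ c` is immediately followed in it by a value `≤ a`. -/
lemma exists_adjacent {n : ℕ} (f : Fin n → Fin n) (a c : Fin n) (d : ℕ) :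
    ∀ x y : Fin n, (y : ℕ) = x + d → a < c → c ≤ f x → f y ≤ a →
      (∀ z, x ≤ z → z ≤ y → f z ≤ a ∨ c ≤ f z) →
      ∃ p q : Fin n, (q : ℕ) = p + 1 ∧ x ≤ p ∧ q ≤ y ∧ c ≤ f p ∧ f q ≤ a := by
  induction d with
  | zero =>
    intro x y hxy hac hx hy _
    have : y = x := Fin.ext (by omega)
    subst this
    exact absurd (hx.trans hy) (not_le.mpr hac)
  | succ d ih =>
    intro x y hxy hac hx hy hall
    have hlt : (x : ℕ) + 1 < n := by omega
    have hx' : x ≤ ⟨x + 1, hlt⟩ := by rw [Fin.le_def]; simp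
    have hy' : (⟨x + 1, hlt⟩ : Fin n) ≤ y := by rw [Fin.le_def, hxy]; simp
    rcases hall ⟨x + 1, hlt⟩ hx' hy' with h | h
    · exact ⟨x, ⟨x + 1, hlt⟩, rfl, le_rfl, hy', hx, h⟩
    · obtain ⟨p, q, hpq, h1, h2, h3, h4⟩ := ih ⟨x + 1, hlt⟩ y (by simp; omega) hac h hy
        (fun z hz1 hz2 => hall z (hx'.trans hz1) hz2)
      exact ⟨p, q, hpq, hx'.trans h1, h2, h3, h4⟩

/-- If every adjacent descent of `m` is robust, the coinversions of `m` are generated by transitivity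
from robust descents, hence belong to every `σ` having the robust descents of `m` as coinversions. -/
lemma inversion_of_robust {k n : ℕ} {m σ : Equiv.Perm (Fin n)}
    (hm : ∀ p q : Fin n, (q : ℕ) = p + 1 → m q < m p → Robust k m (m p) (m q))
    (hσ : ∀ a c, a < c → Robust k m c a → σ.symm c < σ.symm a) : weakLE m σ := by
  suffices H : ∀ d : ℕ, ∀ a c : Fin n, a < c → m.symm c < m.symm a →
      (m.symm a : ℕ) - m.symm c ≤ d → σ.symm c < σ.symm a from
    fun a c hac h => H _ a c hac h le_rfl
  intro d
  induction d with
  | zero =>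
    intro a c _ h hd
    rw [Fin.lt_def] at h
    omega
  | succ d ih =>
    intro a c hac h hd
    by_cases hx : ∃ x, a < x ∧ x < c ∧ m.symm c < m.symm x ∧ m.symm x < m.symm a
    · obtain ⟨x, hax, hxc, h1, h2⟩ := hx
      have h1' := Fin.lt_def.mp h1
      have h2' := Fin.lt_def.mp h2
      exact (ih x c hxc h1 (by omega)).trans (ih a x hax h2 (by omega))
    · apply hσ a c hac
      obtain ⟨p, q, hpq, hp, hq, hcp, hqa⟩ := exists_adjacent m a c
        ((m.symm a : ℕ) - m.symm c) (m.symm c) (m.symm a)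
        (by rw [Fin.lt_def] at h; omega) hac (by simp) (by simp) (by
          intro z hz1 hz2
          by_contra hcon
          push Not at hcon
          refine hx ⟨m z, hcon.1, hcon.2, ?_, ?_⟩
          · rw [Equiv.symm_apply_apply]
            refine lt_of_le_of_ne hz1 (fun e => hcon.2.ne ?_)
            rw [← e, Equiv.apply_symm_apply]
          · rw [Equiv.symm_apply_apply]
            refine lt_of_le_of_ne hz2 (fun e => hcon.1.ne' ?_)
            rw [e, Equiv.apply_symm_apply])
      have hlt : m q < m p := hqa.trans_lt (hac.trans_le hcp)
      refine ⟨h, lt_of_le_of_lt (Finset.card_le_card ?_) (hm p q hpq hlt).2⟩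
      intro b hb
      simp only [Finset.mem_filter, Finset.mem_univ, true_and, Equiv.symm_apply_apply,
        min_eq_right hac.le, max_eq_left hac.le, min_eq_right hlt.le, max_eq_left hlt.le] at hb ⊢
      exact ⟨hqa.trans_lt hb.1, hb.2.1.trans_le hcp, hq.trans_lt hb.2.2⟩

/-- Each class contains an element all of whose adjacent descents are robust, namely its
lexicographically smallest element: exchanging a non-robust adjacent descent is a rewriting step that
makes the word lexicographically smaller. -/
lemma exists_reduced (k : ℕ) {n : ℕ} (τ : Equiv.Perm (Fin n)) :
    ∃ m, twistCong k m τ ∧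
      ∀ p q : Fin n, (q : ℕ) = p + 1 → m q < m p → Robust k m (m p) (m q) := by
  obtain ⟨m, hm, hmin⟩ := Set.exists_min_image {σ | twistCong k σ τ}
    (fun σ => toLex (σ : Fin n → Fin n)) (Set.toFinite _) ⟨τ, Relation.EqvGen.refl τ⟩
  refine ⟨m, hm, fun p q hpq hlt => ?_⟩
  by_contra hr
  have hpq' : p < q := by rw [Fin.lt_def]; omega
  have hstep : twistStep k m (m * Equiv.swap p q) := by
    refine ⟨p, q, hpq, rfl, ?_⟩
    by_contra hcard
    exact hr ⟨by simpa using hpq', by simpa using hcard⟩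
  refine absurd (hmin (m * Equiv.swap p q) ?_) (not_le.mpr ?_)
  · exact (Relation.EqvGen.rel _ _ hstep).symm.trans _ _ _ hm
  · exact Pi.lex_desc hpq'.le hlt

lemma exists_min_projection (k n : ℕ) :
    ∃ mn : Equiv.Perm (Fin n) → Equiv.Perm (Fin n),
      (∀ τ, twistCong k (mn τ) τ ∧ ∀ σ, twistCong k σ τ → weakLE (mn τ) σ) ∧
      (∀ τ τ', weakLE τ τ' → weakLE (mn τ) (mn τ')) := by
  choose mn h1 h2 using fun τ : Equiv.Perm (Fin n) => exists_reduced k τ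
  refine ⟨mn, fun τ => ⟨h1 τ, fun σ hσ => ?_⟩, fun τ τ' h => ?_⟩
  · refine inversion_of_robust (h2 τ) (fun a c _ hr => ?_)
    exact ((robust_iff_of_cong hσ c a).mpr ((robust_iff_of_cong (h1 τ) c a).mp hr)).1
  · refine inversion_of_robust (h2 τ) (fun a c hac hr => ?_)
    exact ((robust_iff_of_cong (h1 τ') c a).mpr
      (Robust.mono h hac ((robust_iff_of_cong (h1 τ) c a).mp hr))).1

lemma symm_rev_mul {n : ℕ} (τ : Equiv.Perm (Fin n)) (x : Fin n) :
    (Fin.revPerm * τ).symm x = τ.symm x.rev := by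
  rw [Equiv.symm_apply_eq]; simp

lemma rev_mul_rev_mul {n : ℕ} (τ : Equiv.Perm (Fin n)) :
    Fin.revPerm * (Fin.revPerm * τ) = τ := by
  ext x; simp

lemma twistStep.rev {k n : ℕ} {τ τ' : Equiv.Perm (Fin n)} (h : twistStep k τ τ') :
    twistStep k (Fin.revPerm * τ) (Fin.revPerm * τ') := by
  obtain ⟨p, q, hpq, rfl, hk⟩ := h
  refine ⟨p, q, hpq, by rw [mul_assoc],
    hk.trans (Finset.card_le_card_of_injOn Fin.rev ?_ Fin.rev_injective.injOn)⟩
  intro b hb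
  simp only [Finset.coe_filter, Finset.mem_univ, true_and, Set.mem_ofPred_eq, symm_rev_mul,
    Fin.rev_rev, Equiv.Perm.mul_apply, Fin.revPerm_apply] at hb ⊢
  obtain ⟨h1, h2, h3⟩ := hb
  refine ⟨?_, ?_, h3⟩
  · rw [min_lt_iff, Fin.rev_lt_rev, Fin.rev_lt_rev]
    exact lt_max_iff.mp h2
  · rw [lt_max_iff, Fin.rev_lt_rev, Fin.rev_lt_rev]
    exact min_lt_iff.mp h1

lemma twistCong.rev {k n : ℕ} {τ τ' : Equiv.Perm (Fin n)} (h : twistCong k τ τ') :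
    twistCong k (Fin.revPerm * τ) (Fin.revPerm * τ') := by
  induction h with
  | rel _ _ h => exact .rel _ _ h.rev
  | refl _ => exact .refl _
  | symm _ _ _ ih => exact .symm _ _ ih
  | trans _ _ _ _ _ ih1 ih2 => exact .trans _ _ _ ih1 ih2

lemma weakLE.rev {n : ℕ} {τ τ' : Equiv.Perm (Fin n)} (h : weakLE τ τ') :
    weakLE (Fin.revPerm * τ') (Fin.revPerm * τ) := by
  intro i j hij hlt
  rw [symm_rev_mul, symm_rev_mul] at hlt ⊢
  have hij' : j.rev < i.rev := Fin.rev_lt_rev.mpr hij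
  by_contra hcon
  have hne : τ.symm i.rev ≠ τ.symm j.rev := fun e => hij'.ne' (τ.symm.injective e)
  exact absurd (h _ _ hij' (lt_of_le_of_ne (not_lt.mp hcon) hne)) hlt.not_gt

/-- For `k ≥ 1` and `n ≥ 1`, the `k`-twist congruence is a lattice
congruence of the weak order on `S_n`: every class has a weak-order minimum and maximum,
and the down/up projections are order preserving. -/
theorem twist_congruence_is_lattice_congruence (k n : ℕ) (hk : 1 ≤ k) (hn : 1 ≤ n) :
    ∃ mn mx : Equiv.Perm (Fin n) → Equiv.Perm (Fin n),
      (∀ τ, twistCong k (mn τ) τ ∧ twistCong k (mx τ) τ ∧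
        ∀ σ, twistCong k σ τ → weakLE (mn τ) σ ∧ weakLE σ (mx τ)) ∧
      (∀ τ τ', weakLE τ τ' → weakLE (mn τ) (mn τ') ∧ weakLE (mx τ) (mx τ')) := by
  obtain ⟨mn, h1, h2⟩ := exists_min_projection k n
  refine ⟨mn, fun τ => Fin.revPerm * mn (Fin.revPerm * τ), fun τ => ⟨(h1 τ).1, ?_, fun σ hσ =>
    ⟨(h1 τ).2 σ hσ, ?_⟩⟩, fun τ τ' h => ⟨h2 τ τ' h, (h2 _ _ h.rev).rev⟩⟩
  · have := (h1 (Fin.revPerm * τ)).1.rev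
    rwa [rev_mul_rev_mul] at this
  · have := ((h1 (Fin.revPerm * τ)).2 _ hσ.rev).rev
    rwa [rev_mul_rev_mul] at this
end

section
/- Fix an integer k ≥ 1, permutations τ ∈ S_n and τ' ∈ S_{n'}, and let X ⊆ S_{n+n'} be the union of the shifted shuffles ρ ⧢ ρ' over all ρ ∈ S_n with ρ ≡ᵏ τ and all ρ' ∈ S_{n'} with ρ' ≡ᵏ τ'. Then X is a union of k-twist congruence classes of S_{n+n'}: if σ ∈ X and σ ≡ᵏ σ̃, then σ̃ ∈ X. -/
/-- `σ` belongs to the shifted shuffle `τ ⧢ τ'`: the values `0,…,n-1` appear in `σ` in the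
same relative order as in `τ`, and the values `n,…,n+n'-1` appear in `σ` in the same
relative order as in the shifted word of `τ'`. -/
def shiftedShuffleMem {n n' : ℕ} (τ : Equiv.Perm (Fin n)) (τ' : Equiv.Perm (Fin n'))
    (σ : Equiv.Perm (Fin (n + n'))) : Prop :=
  (∀ i j : Fin n,
    (σ.symm (Fin.castAdd n' i) < σ.symm (Fin.castAdd n' j) ↔ τ.symm i < τ.symm j)) ∧
  (∀ i j : Fin n',
    (σ.symm (Fin.natAdd n i) < σ.symm (Fin.natAdd n j) ↔ τ'.symm i < τ'.symm j))

/-- `ρ` is the standardization of the subword of `σ` formed by the values in the range of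
`e`, for an increasing `e`. -/
def Restricts {m N : ℕ} (e : Fin m → Fin N) (ρ : Equiv.Perm (Fin m))
    (σ : Equiv.Perm (Fin N)) : Prop :=
  ∀ i j : Fin m, σ.symm (e i) < σ.symm (e j) ↔ ρ.symm i < ρ.symm j

theorem twistStep_symm {k n : ℕ} {σ σ' : Equiv.Perm (Fin n)} (h : twistStep k σ σ') :
    twistStep k σ' σ := by
  obtain ⟨p, q, hpq, rfl, hc⟩ := h
  refine ⟨p, q, hpq, by simp [mul_assoc], hc.trans (Finset.card_le_card ?_)⟩
  intro b hb
  simp only [Finset.mem_filter, Finset.mem_univ, true_and] at hb ⊢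
  obtain ⟨h1, h2, h3⟩ := hb
  have hp : σ.symm b ≠ p := by
    intro h; rw [h, Fin.lt_def] at h3; omega
  have h4 : (σ * Equiv.swap p q).symm b = σ.symm b := by
    change Equiv.swap p q (σ.symm b) = _
    exact Equiv.swap_apply_of_ne_of_ne hp h3.ne'
  rw [h4]
  simp only [Equiv.Perm.mul_apply, Equiv.swap_apply_left, Equiv.swap_apply_right]
  rw [min_comm, max_comm]
  exact ⟨h1, h2, h3⟩

/-- An adjacent transposition of positions preserves the relative order of two positions other
than the exchanged pair. -/
theorem swap_lt_swap_iff {N : ℕ} {p q x y : Fin N} (hpq : (q : ℕ) = p + 1)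
    (h1 : ¬ (x = p ∧ y = q)) (h2 : ¬ (x = q ∧ y = p)) :
    Equiv.swap p q x < Equiv.swap p q y ↔ x < y := by
  simp only [Equiv.swap_apply_def]
  split_ifs <;> simp only [Fin.lt_def, Fin.ext_iff] at * <;> omega

/-- One rewriting step on `σ` induces at most one rewriting step on its restriction to an interval
of values. -/
theorem exists_restricts_of_twistStep {k m N : ℕ} (e : Fin m ↪o Fin N)
    (he : ∀ a c b, e a < b → b < e c → ∃ i, e i = b)
    {σ σ' : Equiv.Perm (Fin N)} (h : twistStep k σ σ')
    {ρ : Equiv.Perm (Fin m)} (hρ : Restricts e ρ σ) :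
    ∃ ρ' : Equiv.Perm (Fin m), twistCong k ρ' ρ ∧ Restricts e ρ' σ' := by
  obtain ⟨p, q, hpq, rfl, hc⟩ := h
  by_cases hr : (∃ a, e a = σ p) ∧ (∃ c, e c = σ q)
  · obtain ⟨⟨a, ha⟩, ⟨c, hcq⟩⟩ := hr
    have hp : σ.symm (e a) = p := by rw [ha, Equiv.symm_apply_apply]
    have hq : σ.symm (e c) = q := by rw [hcq, Equiv.symm_apply_apply]
    have hlt : ρ.symm a < ρ.symm c := by
      rw [← hρ, hp, hq, Fin.lt_def]; omega
    -- An entry of `ρ` strictly between `a` and `c` would sit between positions `p` and `p + 1`.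
    have hadj : (ρ.symm c : ℕ) = ρ.symm a + 1 := by
      by_contra hne
      rw [Fin.lt_def] at hlt
      let z : Fin m := ⟨ρ.symm a + 1, by omega⟩
      have h1 : ρ.symm a < ρ.symm (ρ z) := by
        rw [Equiv.symm_apply_apply, Fin.lt_def]; simp [z]
      have h2 : ρ.symm (ρ z) < ρ.symm c := by
        rw [Equiv.symm_apply_apply, Fin.lt_def]; simp only [z]; omega
      rw [← hρ, hp, Fin.lt_def] at h1
      rw [← hρ, hq, Fin.lt_def] at h2
      omega
    refine ⟨ρ * Equiv.swap (ρ.symm a) (ρ.symm c), Relation.EqvGen.rel _ _ (twistStep_symm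
      ⟨_, _, hadj, rfl, hc.trans ?_⟩), ?_⟩
    · refine (Finset.card_le_card ?_).trans
        (Finset.card_map e.toEmbedding).le
      intro b hb
      simp only [Finset.mem_filter, Finset.mem_univ, true_and, Finset.mem_map,
        Equiv.apply_symm_apply] at hb ⊢
      obtain ⟨h1, h2, h3⟩ := hb
      rw [← ha, ← hcq, ← e.monotone.map_min] at h1
      rw [← ha, ← hcq, ← e.monotone.map_max] at h2
      obtain ⟨i, rfl⟩ := he _ _ _ h1 h2
      refine ⟨i, ⟨e.lt_iff_lt.1 h1, e.lt_iff_lt.1 h2, ?_⟩, rfl⟩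
      rw [← hρ, hq]
      exact h3
    · -- Both exchanges act on values as the transposition of `a` and `c`.
      have key : ∀ i, (σ * Equiv.swap p q).symm (e i) = σ.symm (e (Equiv.swap a c i)) := by
        intro i
        change Equiv.swap p q (σ.symm (e i)) = _
        rw [← hp, ← hq]
        have hinj : Function.Injective (fun i => σ.symm (e i)) :=
          σ.symm.injective.comp e.injective
        exact (hinj.map_swap a c i).symm
      have key' : ∀ i, (ρ * Equiv.swap (ρ.symm a) (ρ.symm c)).symm i
          = ρ.symm (Equiv.swap a c i) := by
        intro i
        change Equiv.swap (ρ.symm a) (ρ.symm c) (ρ.symm i) = _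
        exact (ρ.symm.injective.map_swap a c i).symm
      intro i j
      rw [key, key, key', key']
      exact hρ _ _
  · refine ⟨ρ, Relation.EqvGen.refl _, ?_⟩
    intro i j
    rw [← hρ]
    change Equiv.swap p q (σ.symm (e i)) < Equiv.swap p q (σ.symm (e j)) ↔ _
    apply swap_lt_swap_iff hpq
    · rintro ⟨h1, h2⟩
      exact hr ⟨⟨i, (Equiv.symm_apply_eq σ).1 h1⟩, ⟨j, (Equiv.symm_apply_eq σ).1 h2⟩⟩
    · rintro ⟨h1, h2⟩
      exact hr ⟨⟨j, (Equiv.symm_apply_eq σ).1 h2⟩, ⟨i, (Equiv.symm_apply_eq σ).1 h1⟩⟩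

/-- Restriction to an interval of values is compatible with the `k`-twist congruence. The
induction carries both directions at once, so that its symmetry case is immediate. -/
theorem exists_restricts_of_twistCong {k m N : ℕ} (e : Fin m ↪o Fin N)
    (he : ∀ a c b, e a < b → b < e c → ∃ i, e i = b)
    {σ σ' : Equiv.Perm (Fin N)} (h : twistCong k σ σ')
    {ρ : Equiv.Perm (Fin m)} (hρ : Restricts e ρ σ) :
    ∃ ρ' : Equiv.Perm (Fin m), twistCong k ρ' ρ ∧ Restricts e ρ' σ' := by
  suffices H : (∀ ρ, Restricts e ρ σ → ∃ ρ', twistCong k ρ' ρ ∧ Restricts e ρ' σ') ∧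
      (∀ ρ, Restricts e ρ σ' → ∃ ρ', twistCong k ρ' ρ ∧ Restricts e ρ' σ) from H.1 ρ hρ
  clear hρ ρ
  induction h with
  | rel x y hxy =>
    exact ⟨fun _ hr => exists_restricts_of_twistStep e he hxy hr,
      fun _ hr => exists_restricts_of_twistStep e he (twistStep_symm hxy) hr⟩
  | refl x => exact ⟨fun r hr => ⟨r, .refl _, hr⟩, fun r hr => ⟨r, .refl _, hr⟩⟩
  | symm x y _ ih => exact ⟨ih.2, ih.1⟩
  | trans x y z _ _ ih1 ih2 =>
    constructor
    · intro r hr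
      obtain ⟨s, hs, hs'⟩ := ih1.1 r hr
      obtain ⟨t, ht, ht'⟩ := ih2.1 s hs'
      exact ⟨t, .trans _ _ _ ht hs, ht'⟩
    · intro r hr
      obtain ⟨s, hs, hs'⟩ := ih2.2 r hr
      obtain ⟨t, ht, ht'⟩ := ih1.2 s hs'
      exact ⟨t, .trans _ _ _ ht hs, ht'⟩

/-- For `k ≥ 1`, the union of the shifted shuffles `ρ ⧢ ρ'` over the
`k`-twist congruence classes of `τ ∈ S_n` and `τ' ∈ S_{n'}` is a union of `k`-twist
congruence classes of `S_{n+n'}`. -/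
theorem shuffle_of_twist_classes_is_union_of_classes
    (k : ℕ) (hk : 1 ≤ k) (n n' : ℕ)
    (τ : Equiv.Perm (Fin n)) (τ' : Equiv.Perm (Fin n'))
    (σ σt : Equiv.Perm (Fin (n + n')))
    (hσ : ∃ (ρ : Equiv.Perm (Fin n)) (ρ' : Equiv.Perm (Fin n')),
      twistCong k ρ τ ∧ twistCong k ρ' τ' ∧ shiftedShuffleMem ρ ρ' σ)
    (hcong : twistCong k σ σt) :
    ∃ (ρ : Equiv.Perm (Fin n)) (ρ' : Equiv.Perm (Fin n')),
      twistCong k ρ τ ∧ twistCong k ρ' τ' ∧ shiftedShuffleMem ρ ρ' σt := by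
  obtain ⟨ρ, ρ', h, h', hm, hm'⟩ := hσ
  obtain ⟨r, hr, hr'⟩ := exists_restricts_of_twistCong (Fin.castAddOrderEmb n') (fun _ c b _ hb =>
    ⟨⟨b, lt_trans (Fin.lt_def.1 hb) c.isLt⟩, rfl⟩) hcong (ρ := ρ) hm
  obtain ⟨s, hs, hs'⟩ := exists_restricts_of_twistCong (Fin.natAddOrderEmb n) (fun a _ b hb _ => by
    have h1 : n + (a : ℕ) < b := Fin.lt_def.1 hb
    refine ⟨⟨b - n, by omega⟩, Fin.ext ?_⟩
    change n + ((b : ℕ) - n) = b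
    omega) hcong (ρ := ρ') hm'
  exact ⟨r, s, .trans _ _ _ hr h, .trans _ _ _ hs h', hr', hs'⟩
end
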